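/- arXiv:1612.02580 — 2 statements merged into one kernel-verified Lean document; each statement's English description precedes it below -/
import Mathlib

section
/- Superexponentiality lemma for enriched trees of type III: Suppose ω(0) > 0, ω(k) > 0 for some k ≥ 2, and ∑_k ω(k) t^k = ∞ for every real t > 0. Then for every integer k ≥ 2 and every ε > 0 there is N such that for all n ≥ N, the sum of a(i₁)⋯a(i_k) over all k-tuples (i₁,…,i_k) of positive integers with i₁+⋯+i_k = n and i_j ≤ n−k for every j is at most ε·a(n−k+1). (Both sides of this inequality vanish unless n ≡ k mod d, where d is the span of ω.) -/
/-!
Let `Z(m, n)` be the total weight of `n`-tuples with sum `m`, and `F(n, k)` the total weight of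
plane forests of `k` trees with `n` vertices. The hitting-time theorem (`mul_F`) says
`n F(n, k) = k Z(n - k, n)`, and `a(n) = F(n, 1)` (`a_eq_F`). Forests consisting of one tree of size
`n - k + 1` and `k - 1` single vertices contribute `k ω(0)^(k-1) a(n - k + 1)` to `F(n, k)`, and all
other forests are those of the statement (`small_add_le`). Hence it suffices to show
`Z(m, n + 1) ≤ (1 + o(1)) ω(0) Z(m, n)` uniformly in `m ≤ n + 1` (`Z_succ_le`), that is: when `m`
balls are distributed in `n + 1` boxes according to the weights, a given box is empty with
probability tending to `1`. By symmetry this means that the mean number of nonempty boxes is `o(n)`.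

Boxes with more than `M` balls make up a proportion of at most about `1 / M`, so it is enough to
treat each fixed content `r ≥ 1`. Because `∑ ω(i) t^i` has radius of convergence `0`, there is `R`
such that trading `R` boxes of content `r` for `r` boxes of content `R` and `R - r` empty ones
multiplies the weight by at least `ρ^(-R)`, with `ρ` as small as desired (`exists_large`). This trade
keeps the numbers of boxes and balls, so `R` prescribed boxes all have content `r` with probability
at most `ρ^R` (`exchange`). The `R`-th moment of the proportion of boxes of content `r` is thus at
most `ρ^R + O(1 / n)` (`moment_le`), and Jensen's inequality bounds its mean (`count_eq_small`).
-/

open Finset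
open scoped Classical

namespace EnrichedTrees

/-- `a ω n` (for `n ≥ 1`) is the sum of `ω j₁ ⋯ ω jₙ` over all `n`-tuples of nonnegative
integers with `j₁ + ⋯ + jₙ = n - 1` and `j₁ + ⋯ + j_s ≥ s` for all `1 ≤ s ≤ n - 1`:
the total `ω`-weight of Łukasiewicz paths, i.e. of plane trees with `n` vertices.
By convention `a ω 0 = 0`. -/
noncomputable def a (ω : ℕ → ℝ) (n : ℕ) : ℝ :=
  if n = 0 then 0 else
    ∑ t ∈ (Finset.Nat.antidiagonalTuple n (n - 1)).filter
        (fun t => ∀ s ∈ Finset.Icc 1 (n - 1),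
          s ≤ ∑ i ∈ Finset.univ.filter (fun i : Fin n => (i : ℕ) < s), t i),
      ∏ i, ω (t i)


/-! ### Splitting off one coordinate -/

/-- A sum over tuples of total `m` splits according to the value of the `i`-th coordinate. -/
lemma sum_insertNth {n : ℕ} (m : ℕ) (i : Fin (n + 1)) (g : (Fin (n + 1) → ℕ) → ℝ) :
    ∑ t ∈ Finset.Nat.antidiagonalTuple (n + 1) m, g t =
      ∑ p ∈ antidiagonal m, ∑ t ∈ Finset.Nat.antidiagonalTuple n p.2,
        g (i.insertNth (α := fun _ => ℕ) p.1 t) := by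
  rw [Finset.sum_sigma']
  refine Finset.sum_bij' (fun t _ => ⟨(t i, ∑ j, t (i.succAbove j)), fun j => t (i.succAbove j)⟩)
    (fun s _ => i.insertNth (α := fun _ => ℕ) s.1.1 s.2) ?_ ?_ ?_ ?_ ?_
  · intro t ht
    rw [Finset.Nat.mem_antidiagonalTuple, Fin.sum_univ_succAbove _ i] at ht
    simp [Finset.Nat.mem_antidiagonalTuple, ht]
  · rintro ⟨⟨x, y⟩, t⟩ ht
    simp only [mem_sigma, HasAntidiagonal.mem_antidiagonal, Finset.Nat.mem_antidiagonalTuple] at ht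
    simp [Finset.Nat.mem_antidiagonalTuple, Fin.sum_univ_succAbove _ i, ht]
  · intro t ht
    exact Fin.insertNth_self_removeNth i t
  · rintro ⟨⟨x, y⟩, t⟩ ht
    simp only [mem_sigma, HasAntidiagonal.mem_antidiagonal, Finset.Nat.mem_antidiagonalTuple] at ht
    obtain ⟨h1, rfl⟩ := ht
    simp
  · intro t ht
    congr 1
    exact (Fin.insertNth_self_removeNth i t).symm

/-- The partition function `Z(m, n)` of balls-in-boxes: total weight of the `n`-tuples with
sum `m`. -/
noncomputable def Z (ω : ℕ → ℝ) (m n : ℕ) : ℝ :=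
  ∑ t ∈ Finset.Nat.antidiagonalTuple n m, ∏ i, ω (t i)

lemma Z_nonneg {ω : ℕ → ℝ} (hω : ∀ i, 0 ≤ ω i) (m n : ℕ) : 0 ≤ Z ω m n :=
  sum_nonneg fun _ _ => prod_nonneg fun _ _ => hω _

/-- Weighted sum over tuples of a function of one coordinate; by symmetry the value does not
depend on which coordinate is used. -/
lemma sum_coord (ω g : ℕ → ℝ) (m n : ℕ) (i : Fin (n + 1)) :
    ∑ t ∈ Finset.Nat.antidiagonalTuple (n + 1) m, (∏ j, ω (t j)) * g (t i) =
      ∑ p ∈ antidiagonal m, g p.1 * (ω p.1 * Z ω p.2 n) := by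
  rw [sum_insertNth m i]
  refine sum_congr rfl fun p _ => ?_
  rw [Z, mul_sum, mul_sum]
  refine sum_congr rfl fun t _ => ?_
  rw [Fin.prod_univ_succAbove _ i]
  simp
  ring

lemma Z_succ (ω : ℕ → ℝ) (m n : ℕ) :
    Z ω m (n + 1) = ∑ p ∈ antidiagonal m, ω p.1 * Z ω p.2 n := by
  simpa [Z] using sum_coord ω (fun _ => 1) m n 0

lemma sum_sum_coord (ω g : ℕ → ℝ) (m n : ℕ) :
    ∑ t ∈ Finset.Nat.antidiagonalTuple (n + 1) m, (∏ j, ω (t j)) * ∑ i, g (t i) =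
      (n + 1) * ∑ p ∈ antidiagonal m, g p.1 * (ω p.1 * Z ω p.2 n) := by
  simp_rw [mul_sum]
  rw [sum_comm]
  simp_rw [sum_coord]
  simp [mul_sum]

/-- Size-biasing identity, from `∑ i, t i = m`. -/
lemma mul_Z (ω : ℕ → ℝ) (m n : ℕ) :
    m * Z ω m (n + 1) = (n + 1) * ∑ p ∈ antidiagonal m, (p.1 : ℝ) * (ω p.1 * Z ω p.2 n) := by
  rw [← sum_sum_coord ω (fun x => (x : ℝ)), Z, mul_sum]
  refine sum_congr rfl fun t ht => ?_
  rw [Finset.Nat.mem_antidiagonalTuple] at ht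
  rw [mul_comm, ← ht]
  push_cast
  rfl

/-! ### Forests and the hitting-time theorem -/

/-- `F ω n k` is the total weight of plane forests of `k` trees with `n` vertices, computed by
removing the root of the first tree. -/
noncomputable def F (ω : ℕ → ℝ) : ℕ → ℕ → ℝ
  | 0, k => if k = 0 then 1 else 0
  | _ + 1, 0 => 0
  | n + 1, k + 1 => ∑ j ∈ range (n + 1), ω j * F ω n (k + j)

lemma F_eq_zero (ω : ℕ → ℝ) : ∀ n k, n < k → F ω n k = 0
  | 0, k, h => by simp [F]; omega
  | n + 1, 0, h => by omega
  | n + 1, k + 1, h => by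
    rw [F]
    exact sum_eq_zero fun j _ => by rw [F_eq_zero ω n (k + j) (by omega), mul_zero]

lemma F_nonneg {ω : ℕ → ℝ} (hω : ∀ i, 0 ≤ ω i) : ∀ n k, 0 ≤ F ω n k
  | 0, k => by rw [F]; split_ifs <;> norm_num
  | n + 1, 0 => le_rfl
  | n + 1, k + 1 => sum_nonneg fun j _ => mul_nonneg (hω j) (F_nonneg hω n _)

lemma F_succ_succ (ω : ℕ → ℝ) {n k : ℕ} (h : k ≤ n) :
    F ω (n + 1) (k + 1) = ∑ p ∈ antidiagonal (n - k), ω p.1 * F ω n (k + p.1) := by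
  rw [F, Finset.Nat.sum_antidiagonal_eq_sum_range_succ_mk]
  symm
  refine sum_subset (fun x hx => ?_) (fun x _ hx => ?_)
  · simp only [mem_range] at *; omega
  · simp only [mem_range] at hx
    simp only
    rw [F_eq_zero ω n _ (by omega), mul_zero]

/-- The hitting-time theorem (cycle lemma), by induction on `n` with the size-biasing identity. -/
lemma mul_F (ω : ℕ → ℝ) : ∀ n k : ℕ, k ≤ n → (n : ℝ) * F ω n k = k * Z ω (n - k) n
  | 0, k, h => by
    obtain rfl : k = 0 := by omega
    simp
  | n + 1, 0, h => by simp [F]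
  | n + 1, k + 1, h => by
    have hk : k ≤ n := by omega
    rcases Nat.eq_zero_or_pos n with rfl | hn
    · obtain rfl : k = 0 := by omega
      simp [F, Z]
    have hn' : (0 : ℝ) < n := by exact_mod_cast hn
    have key : (n : ℝ) * F ω (n + 1) (k + 1) =
        k * Z ω (n - k) (n + 1) +
          ∑ p ∈ antidiagonal (n - k), (p.1 : ℝ) * (ω p.1 * Z ω p.2 n) := by
      rw [F_succ_succ ω hk, Z_succ, mul_sum, mul_sum, ← sum_add_distrib]
      refine sum_congr rfl fun p hp => ?_
      rw [HasAntidiagonal.mem_antidiagonal] at hp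
      have := mul_F ω n (k + p.1) (by omega)
      rw [show n - (k + p.1) = p.2 by omega] at this
      rw [mul_left_comm, this]
      push_cast
      ring
    have h2 := mul_Z ω (n - k) n
    rw [Nat.cast_sub hk] at h2
    rw [show n + 1 - (k + 1) = n - k by omega]
    apply mul_left_cancel₀ hn'.ne'
    push_cast
    linear_combination (n + 1 : ℝ) * key - h2

/-- Cutting a forest of `k + l` trees after its first `k` trees. -/
lemma F_add (ω : ℕ → ℝ) : ∀ n k l,
    F ω n (k + l) = ∑ p ∈ antidiagonal n, F ω p.1 k * F ω p.2 l
  | n, 0, l => by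
    rw [Finset.sum_eq_single (0, n)]
    · simp [F]
    · rintro ⟨x, y⟩ hp hne
      rw [HasAntidiagonal.mem_antidiagonal] at hp
      have : x ≠ 0 := by
        rintro rfl
        apply hne
        simpa using hp
      obtain ⟨x, rfl⟩ := Nat.exists_eq_succ_of_ne_zero this
      simp [F]
    · simp
  | 0, k + 1, l => by
    simp [F]
  | n + 1, k + 1, l => by
    rw [show k + 1 + l = (k + l) + 1 by ring, F, Finset.Nat.sum_antidiagonal_succ]
    simp only [F]
    have : ∀ p ∈ antidiagonal n, (∑ j ∈ range (p.1 + 1), ω j * F ω p.1 (k + j)) * F ω p.2 l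
        = ∑ j ∈ range (n + 1), ω j * (F ω p.1 (k + j) * F ω p.2 l) := by
      intro p hp
      rw [HasAntidiagonal.mem_antidiagonal] at hp
      rw [sum_mul]
      simp_rw [mul_assoc]
      refine sum_subset (fun x hx => ?_) (fun x _ hx => ?_)
      · simp only [mem_range] at *; omega
      · simp only [mem_range] at hx
        rw [F_eq_zero ω p.1 _ (by omega)]
        ring
    rw [sum_congr rfl this, sum_comm]
    simp only [Nat.succ_ne_zero, if_false, zero_mul, zero_add]
    refine sum_congr rfl fun j _ => ?_
    rw [show k + l + j = (k + j) + l by ring, F_add ω n (k + j) l, mul_sum]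

lemma sum_prod_F (ω : ℕ → ℝ) : ∀ k n,
    ∑ t ∈ Finset.Nat.antidiagonalTuple k n, ∏ j, F ω (t j) 1 = F ω n k
  | 0, 0 => by simp [F]
  | 0, n + 1 => by simp [F]
  | k + 1, n => by
    rw [sum_insertNth n 0, show F ω n (k + 1) = F ω n (1 + k) by rw [add_comm], F_add]
    refine sum_congr rfl fun p _ => ?_
    rw [← sum_prod_F ω k p.2, mul_sum]
    refine sum_congr rfl fun t _ => ?_
    rw [Fin.prod_univ_succ]
    simp

/-- Weight of the paths of length `n` from height `k` (each step `x` changing the height by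
`x - 1`) that reach height `0` at time `n` and not before. -/
noncomputable def H (ω : ℕ → ℝ) (n k : ℕ) : ℝ :=
  if k ≤ n then
    ∑ t ∈ Finset.Nat.antidiagonalTuple n (n - k),
      if ∀ s < n, s < k + ∑ i : Fin n, (if (i : ℕ) < s then t i else 0) then ∏ i, ω (t i) else 0
  else 0

lemma H_eq_F (ω : ℕ → ℝ) : ∀ n k, H ω n k = F ω n k
  | 0, 0 => by simp [H, F]
  | 0, k + 1 => by simp [H, F]
  | n + 1, 0 => by
    rw [H, if_pos (by omega), F]
    refine sum_eq_zero fun t _ => if_neg fun h => ?_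
    simpa using h 0 (by omega)
  | n + 1, k + 1 => by
    by_cases hk : k ≤ n
    swap
    · rw [F_eq_zero _ _ _ (by omega), H, if_neg (by omega)]
    rw [H, if_pos (by omega), F_succ_succ ω hk, show n + 1 - (k + 1) = n - k by omega,
      sum_insertNth _ 0]
    refine sum_congr rfl fun p hp => ?_
    rw [HasAntidiagonal.mem_antidiagonal] at hp
    rw [← H_eq_F ω n, H, if_pos (by omega), show n - (k + p.1) = p.2 by omega, mul_sum]
    refine sum_congr rfl fun t _ => ?_
    rw [mul_ite, mul_zero]
    congr 1
    · apply propext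
      constructor
      · intro h s hs
        have := h (s + 1) (by omega)
        simp only [Fin.sum_univ_succ, Fin.insertNth_zero', Fin.cons_zero, Fin.cons_succ,
          Fin.val_zero, Fin.val_succ, Nat.succ_pos, if_true, add_lt_add_iff_right] at this
        omega
      · intro h s hs
        rcases s with _ | s
        · omega
        have := h s (by omega)
        simp only [Fin.sum_univ_succ, Fin.insertNth_zero', Fin.cons_zero, Fin.cons_succ,
          Fin.val_zero, Fin.val_succ, Nat.succ_pos, if_true, add_lt_add_iff_right]
        omega
    · rw [Fin.prod_univ_succ]
      simp

lemma a_eq_F (ω : ℕ → ℝ) (n : ℕ) : a ω n = F ω n 1 := by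
  rcases Nat.eq_zero_or_pos n with rfl | hn
  · simp [a, F]
  rw [← H_eq_F, H, a, if_neg (by omega), if_pos (by omega), sum_filter]
  refine sum_congr rfl fun t _ => ?_
  congr 1
  apply propext
  constructor
  · intro h s hs
    rcases Nat.eq_zero_or_pos s with rfl | hs0
    · omega
    have := h s (by rw [mem_Icc]; omega)
    rw [sum_filter] at this
    omega
  · intro h s hs
    rw [mem_Icc] at hs
    have := h s (by omega)
    rw [sum_filter]
    omega

/-! ### Few nonempty boxes -/

/-- Since the weights have zero radius of convergence, some `ω R` is so large that replacing `R`
entries `r` by `r` entries `R` and `R - r` entries `0` multiplies the weight by at least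
`ρ⁻¹ ^ R`. -/
lemma exists_large {ω : ℕ → ℝ} (hω : ∀ i, 0 ≤ ω i) (h0 : 0 < ω 0)
    (hIII : ∀ t : ℝ, 0 < t → ¬ Summable (fun i => ω i * t ^ i))
    {r : ℕ} (hr : 1 ≤ r) {ρ : ℝ} (hρ : 0 < ρ) :
    ∃ R, r ≤ R ∧ 0 < ω R ∧ ω r ^ R ≤ ρ ^ R * (ω R ^ r * ω 0 ^ (R - r)) := by
  set c := min (ω 0) 1 with hc
  have hc0 : 0 < c := lt_min h0 one_pos
  set A := max 1 (ω r / (ρ * c)) with hA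
  have hA1 : 1 ≤ A := le_max_left _ _
  have hA0 : 0 < A := by linarith
  have hAr : ω r ≤ ρ * (A ^ r * c) := by
    have h1 : ω r / (ρ * c) ≤ A := le_max_right _ _
    rw [div_le_iff₀ (by positivity)] at h1
    have h2 : A ≤ A ^ r := le_self_pow₀ hA1 (by omega)
    calc ω r ≤ A * (ρ * c) := h1
      _ ≤ A ^ r * (ρ * c) := by gcongr
      _ = _ := by ring
  obtain ⟨R, hR, hRA⟩ : ∃ R, r ≤ R ∧ A ^ R < ω R := by
    by_contra! hcon
    apply hIII (1 / (2 * A)) (by positivity)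
    rw [← summable_nat_add_iff r]
    refine Summable.of_nonneg_of_le (fun i => mul_nonneg (hω _) (by positivity)) (fun i => ?_)
      ((summable_nat_add_iff r).2 summable_geometric_two)
    calc ω (i + r) * (1 / (2 * A)) ^ (i + r) ≤ A ^ (i + r) * (1 / (2 * A)) ^ (i + r) := by
          gcongr
          exact hcon _ (by omega)
      _ = (1 / 2) ^ (i + r) := by
          rw [← mul_pow]
          congr 1
          field_simp
  have hRpos : 0 < ω R := lt_trans (by positivity) hRA
  refine ⟨R, hR, hRpos, ?_⟩
  have hc1 : c ^ R ≤ ω 0 ^ (R - r) :=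
    calc c ^ R ≤ c ^ (R - r) := pow_le_pow_of_le_one hc0.le (min_le_right _ _) (by omega)
      _ ≤ ω 0 ^ (R - r) := pow_le_pow_left₀ hc0.le (min_le_left _ _) _
  calc ω r ^ R ≤ (ρ * (A ^ r * c)) ^ R := pow_le_pow_left₀ (hω _) hAr _
    _ = ρ ^ R * ((A ^ R) ^ r * c ^ R) := by rw [mul_pow, mul_pow, ← pow_mul, ← pow_mul, mul_comm r]
    _ ≤ _ := by gcongr

/-- Splitting a product over `Fin n` along an injection from `Fin R`. -/
lemma prod_split {M : Type*} [CommMonoid M] {n R : ℕ} {f : Fin R → Fin n}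
    (hf : Function.Injective f) (h : Fin n → M) :
    ∏ x, h x = (∏ i, h (f i)) * ∏ x ∈ (univ.image f)ᶜ, h x := by
  rw [← prod_mul_prod_compl (univ.image f), prod_image fun x _ y _ hxy => hf hxy]

lemma sum_split {n R : ℕ} {f : Fin R → Fin n}
    (hf : Function.Injective f) (h : Fin n → ℕ) :
    ∑ x, h x = (∑ i, h (f i)) + ∑ x ∈ (univ.image f)ᶜ, h x := by
  rw [← sum_add_sum_compl (univ.image f), sum_image fun x _ y _ hxy => hf hxy]

lemma prod_ite_lt {M : Type*} [CommMonoid M] {r R : ℕ} (h : r ≤ R) (x y : M) :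
    ∏ i : Fin R, (if (i : ℕ) < r then x else y) = x ^ r * y ^ (R - r) := by
  obtain ⟨s, rfl⟩ := Nat.exists_eq_add_of_le h
  rw [Fin.prod_univ_add]
  simp

/-- The exchange argument: prescribing the value `r` in `R` given places costs a factor `ρ ^ R`. -/
lemma exchange {ω : ℕ → ℝ} (hω : ∀ i, 0 ≤ ω i) (h0 : 0 < ω 0) {r R : ℕ} (hrR : r ≤ R)
    (hR : 0 < ω R) {ρ : ℝ} (hle : ω r ^ R ≤ ρ ^ R * (ω R ^ r * ω 0 ^ (R - r)))
    (m n : ℕ) {f : Fin R → Fin n} (hf : Function.Injective f) :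
    ∑ t ∈ (Finset.Nat.antidiagonalTuple n m).filter (fun t => ∀ i, t (f i) = r), ∏ i, ω (t i)
      ≤ ρ ^ R * Z ω m n := by
  set c := ω R ^ r * ω 0 ^ (R - r) with hc
  have hc0 : 0 < c := by positivity
  set v : Fin R → ℕ := fun i => if (i : ℕ) < r then R else 0 with hv
  have hvsum : ∑ i, v i = r * R := by
    have h2 : ∑ i : Fin R, (if (i : ℕ) < r then R else 0) = r • R + (R - r) • 0 := by
      obtain ⟨s, rfl⟩ := Nat.exists_eq_add_of_le hrR
      rw [Fin.sum_univ_add]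
      simp
    simpa using h2
  -- overwrite the places `f i` by `r` entries `R` and `R - r` entries `0`
  set φ : (Fin n → ℕ) → (Fin n → ℕ) := fun t => Function.extend f v t with hφ
  have hφ1 : ∀ t i, φ t (f i) = v i := fun t i => hf.extend_apply _ _ _
  have hφ2 : ∀ t, ∀ x ∈ (univ.image f)ᶜ, φ t x = t x := by
    intro t x hx
    refine Function.extend_apply' _ _ _ ?_
    simpa using hx
  set S := (Finset.Nat.antidiagonalTuple n m).filter (fun t => ∀ i, t (f i) = r) with hS
  have hmap : ∀ t ∈ S, φ t ∈ Finset.Nat.antidiagonalTuple n m := by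
    intro t ht
    rw [hS, mem_filter, Finset.Nat.mem_antidiagonalTuple, sum_split hf] at ht
    rw [Finset.Nat.mem_antidiagonalTuple, sum_split hf, sum_congr rfl (hφ2 t), ← ht.1]
    simp [hφ1, hvsum, ht.2, mul_comm]
  have hinj : Set.InjOn φ S := by
    intro t ht u hu htu
    rw [mem_coe, hS, mem_filter] at ht hu
    funext x
    by_cases hx : x ∈ univ.image f
    · obtain ⟨i, -, rfl⟩ := mem_image.1 hx
      rw [ht.2, hu.2]
    · rw [← hφ2 t x (by simpa using hx), htu, hφ2 u x (by simpa using hx)]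
  have hw : ∀ t ∈ S, (∏ i, ω (t i)) * c = ω r ^ R * ∏ i, ω (φ t i) := by
    intro t ht
    rw [hS, mem_filter] at ht
    rw [prod_split hf (fun x => ω (t x)), prod_split hf (fun x => ω (φ t x))]
    rw [prod_congr rfl (fun x hx => by rw [hφ2 t x hx] :
      ∀ x ∈ (univ.image f)ᶜ, ω (φ t x) = ω (t x))]
    simp only [hφ1, ht.2, hv, apply_ite ω, prod_ite_lt hrR]
    simp
    ring
  refine le_of_mul_le_mul_right ?_ hc0
  calc (∑ t ∈ S, ∏ i, ω (t i)) * c = ω r ^ R * ∑ t ∈ S, ∏ i, ω (φ t i) := by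
        rw [sum_mul, mul_sum]
        exact sum_congr rfl hw
    _ = ω r ^ R * ∑ t ∈ S.image φ, ∏ i, ω (t i) := by rw [sum_image hinj]
    _ ≤ ω r ^ R * Z ω m n := by
        refine mul_le_mul_of_nonneg_left ?_ (pow_nonneg (hω _) _)
        refine sum_le_sum_of_subset_of_nonneg ?_ fun t _ _ => prod_nonneg fun i _ => hω _
        intro t ht
        obtain ⟨u, hu, rfl⟩ := mem_image.1 ht
        exact hmap u hu
    _ ≤ (ρ ^ R * c) * Z ω m n := mul_le_mul_of_nonneg_right hle (Z_nonneg hω _ _)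
    _ = ρ ^ R * Z ω m n * c := by ring

/-- Most maps `Fin R → Fin n` are injective when `n` is large. -/
lemma card_not_injective {n R : ℕ} (hn : R ≤ n) (hn0 : 0 < n) :
    ((univ.filter fun f : Fin R → Fin n => ¬ Function.Injective f).card : ℝ)
      ≤ (n : ℝ) ^ R * (R ^ 2 / n) := by
  have hn0' : (0 : ℝ) < n := by exact_mod_cast hn0
  have h1 : (univ.filter fun f : Fin R → Fin n => Function.Injective f).card
      = n.descFactorial R := by
    rw [← Fintype.card_subtype, Fintype.card_congr (Equiv.subtypeInjectiveEquivEmbedding _ _),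
      Fintype.card_embedding_eq]
    simp
  have h2 := card_filter_add_card_filter_not (s := (univ : Finset (Fin R → Fin n)))
    (fun f => Function.Injective f)
  rw [h1, card_univ, Fintype.card_fun, Fintype.card_fin, Fintype.card_fin] at h2
  have h3 : ((n.descFactorial R : ℕ) : ℝ) +
      ((univ.filter fun f : Fin R → Fin n => ¬ Function.Injective f).card : ℝ) = (n : ℝ) ^ R := by
    exact_mod_cast h2
  have h4 : (((n + 1 - R : ℕ) : ℝ)) ^ R ≤ (n.descFactorial R : ℕ) := by
    exact_mod_cast Nat.pow_sub_le_descFactorial n R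
  have hRn : (R : ℝ) / n ≤ 1 := by
    rw [div_le_one hn0']; exact_mod_cast hn
  have h5 : (1 : ℝ) + R * (-(R / n)) ≤ (1 + -(R / n)) ^ R :=
    one_add_mul_le_pow (by linarith) R
  have h6 : (n : ℝ) ^ R * (1 + -(R / n)) ^ R ≤ ((n + 1 - R : ℕ) : ℝ) ^ R := by
    rw [← mul_pow]
    refine pow_le_pow_left₀ (mul_nonneg hn0'.le (by linarith)) ?_ _
    rw [Nat.cast_sub (by omega)]
    push_cast
    have : (n : ℝ) * (1 + -(R / n)) = n - R := by field_simp; ring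
    linarith
  have h7 : (n : ℝ) ^ R * (1 + R * (-(R / n))) ≤ (n : ℝ) ^ R * (1 + -(R / n)) ^ R := by gcongr
  have h8 : (n : ℝ) ^ R * (1 + R * (-(R / n))) = (n : ℝ) ^ R - (n : ℝ) ^ R * (R ^ 2 / n) := by ring
  linarith

/-- `R`-th moment of the number of boxes with content `r`: it counts maps `f : Fin R → Fin n` into
those boxes, where `exchange` handles the injective `f` and the others are few. -/
lemma moment_le {ω : ℕ → ℝ} (hω : ∀ i, 0 ≤ ω i) (h0 : 0 < ω 0) {r R : ℕ} (hrR : r ≤ R)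
    (hR : 0 < ω R) {ρ : ℝ} (hρ : 0 < ρ)
    (hle : ω r ^ R ≤ ρ ^ R * (ω R ^ r * ω 0 ^ (R - r)))
    (m n : ℕ) (hn : R ≤ n) (hn0 : 0 < n) :
    ∑ t ∈ Finset.Nat.antidiagonalTuple n m,
        (∏ i, ω (t i)) * (∑ i, if t i = r then (1 : ℝ) else 0) ^ R
      ≤ (n : ℝ) ^ R * (ρ ^ R + R ^ 2 / n) * Z ω m n := by
  have e1 : ∀ t : Fin n → ℕ, (∏ i, ω (t i)) * (∑ i, if t i = r then (1 : ℝ) else 0) ^ R =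
      ∑ f : Fin R → Fin n, if ∀ i, t (f i) = r then ∏ i, ω (t i) else 0 := by
    intro t
    rw [Fintype.sum_pow, mul_sum]
    refine sum_congr rfl fun f _ => ?_
    rw [Fintype.prod_boole]
    simp
  simp_rw [e1]
  rw [sum_comm]
  simp_rw [← sum_filter]
  rw [← sum_filter_add_sum_filter_not univ (fun f : Fin R → Fin n => Function.Injective f)]
  have hZ := Z_nonneg hω m n
  have b1 : ∑ f : Fin R → Fin n with Function.Injective f,
      ∑ t ∈ (Finset.Nat.antidiagonalTuple n m).filter (fun t => ∀ i, t (f i) = r), ∏ i, ω (t i)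
      ≤ (n : ℝ) ^ R * (ρ ^ R * Z ω m n) := by
    refine (sum_le_card_nsmul _ _ (ρ ^ R * Z ω m n) fun f hf =>
      exchange hω h0 hrR hR hle m n (mem_filter.1 hf).2).trans ?_
    rw [nsmul_eq_mul]
    refine mul_le_mul_of_nonneg_right ?_ (by positivity)
    have := card_filter_le (univ : Finset (Fin R → Fin n)) (fun f => Function.Injective f)
    rw [card_univ, Fintype.card_fun, Fintype.card_fin, Fintype.card_fin] at this
    exact_mod_cast this
  have b2 : ∑ f : Fin R → Fin n with ¬ Function.Injective f,
      ∑ t ∈ (Finset.Nat.antidiagonalTuple n m).filter (fun t => ∀ i, t (f i) = r), ∏ i, ω (t i)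
      ≤ (n : ℝ) ^ R * (R ^ 2 / n) * Z ω m n := by
    refine (sum_le_card_nsmul _ _ (Z ω m n) fun f hf =>
      sum_le_sum_of_subset_of_nonneg (filter_subset _ _)
        fun t _ _ => prod_nonneg fun i _ => hω _).trans ?_
    rw [nsmul_eq_mul]
    exact mul_le_mul_of_nonneg_right (card_not_injective hn hn0) hZ
  calc _ ≤ _ := add_le_add b1 b2
    _ = _ := by ring

/-- For each fixed `r ≥ 1`, the average proportion of boxes with content `r` tends to `0`,
uniformly in the number `m` of balls. -/
lemma count_eq_small {ω : ℕ → ℝ} (hω : ∀ i, 0 ≤ ω i) (h0 : 0 < ω 0)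
    (hIII : ∀ t : ℝ, 0 < t → ¬ Summable (fun i => ω i * t ^ i))
    {r : ℕ} (hr : 1 ≤ r) {η : ℝ} (hη : 0 < η) :
    ∃ N : ℕ, ∀ n, N ≤ n → ∀ m,
      ∑ t ∈ Finset.Nat.antidiagonalTuple n m,
        (∏ i, ω (t i)) * (∑ i, if t i = r then (1 : ℝ) else 0) ≤ η * n * Z ω m n := by
  obtain ⟨R, hrR, hR, hle⟩ := exists_large hω h0 hIII hr (half_pos hη)
  have hgap : 0 < η ^ R - (η / 2) ^ R :=
    sub_pos.2 (pow_lt_pow_left₀ (by linarith) (by positivity) (by omega))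
  obtain ⟨N, hN⟩ := exists_nat_ge ((R : ℝ) ^ 2 / (η ^ R - (η / 2) ^ R))
  refine ⟨max N (R + 1), fun n hn m => ?_⟩
  have hn0 : 0 < n := by have := le_max_right N (R + 1); omega
  have hn0' : (0 : ℝ) < n := by exact_mod_cast hn0
  have hnN : (N : ℝ) ≤ n := by exact_mod_cast (le_max_left _ _).trans hn
  have hε : (η / 2) ^ R + (R : ℝ) ^ 2 / n ≤ η ^ R := by
    have : (R : ℝ) ^ 2 / n ≤ η ^ R - (η / 2) ^ R := by
      rw [div_le_iff₀ hn0']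
      rw [div_le_iff₀ hgap] at hN
      nlinarith
    linarith
  have hmom := moment_le hω h0 hrR hR (half_pos hη) hle m n
    (by have := le_max_right N (R + 1); omega) hn0
  have hw : ∀ t : Fin n → ℕ, 0 ≤ ∏ i, ω (t i) := fun t => prod_nonneg fun i _ => hω _
  rcases (Z_nonneg hω m n).eq_or_lt with hZ | hZ
  · rw [← hZ, mul_zero]
    refine le_of_eq (sum_eq_zero fun t ht => ?_)
    rw [(sum_eq_zero_iff_of_nonneg fun t _ => hw t).1 hZ.symm t ht, zero_mul]
  -- Jensen's inequality for the normalised weights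
  have hJ := Real.pow_arith_mean_le_arith_mean_pow (Finset.Nat.antidiagonalTuple n m)
    (fun t => (∏ i, ω (t i)) / Z ω m n) (fun t => ∑ i, if t i = r then (1 : ℝ) else 0)
    (fun t _ => div_nonneg (hw t) hZ.le) (by rw [← sum_div]; exact div_self hZ.ne')
    (fun t _ => sum_nonneg fun i _ => by split_ifs <;> norm_num) R
  simp_rw [div_mul_eq_mul_div, ← sum_div] at hJ
  have h1 := hJ.trans ((div_le_iff₀ hZ).2 hmom)
  have h2 : (n : ℝ) ^ R * ((η / 2) ^ R + (R : ℝ) ^ 2 / n) ≤ (η * n) ^ R := by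
    rw [mul_pow, mul_comm (η ^ R)]
    gcongr
  have h3 := le_of_pow_le_pow_left₀ (by omega) (by positivity) (h1.trans h2)
  rwa [div_le_iff₀ hZ] at h3

/-- At most `m / M` boxes contain more than `M` balls, so the average proportion of nonempty boxes
tends to `0`, uniformly over `m ≤ n`. -/
lemma count_ne_zero_small {ω : ℕ → ℝ} (hω : ∀ i, 0 ≤ ω i) (h0 : 0 < ω 0)
    (hIII : ∀ t : ℝ, 0 < t → ¬ Summable (fun i => ω i * t ^ i)) {η : ℝ} (hη : 0 < η) :
    ∃ N : ℕ, ∀ n, N ≤ n → ∀ m ≤ n,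
      ∑ t ∈ Finset.Nat.antidiagonalTuple n m,
        (∏ i, ω (t i)) * (∑ i, if t i = 0 then (0 : ℝ) else 1) ≤ η * n * Z ω m n := by
  obtain ⟨M, hM⟩ := exists_nat_ge (2 / η)
  have hM0 : (0 : ℝ) < M := lt_of_lt_of_le (by positivity) hM
  have hMη : 1 / (M : ℝ) ≤ η / 2 := by
    rw [div_le_iff₀ hM0]
    rw [div_le_iff₀ hη] at hM
    linarith
  have hall : ∀ r ∈ Icc 1 M, ∃ N : ℕ, ∀ n, N ≤ n → ∀ m,
      ∑ t ∈ Finset.Nat.antidiagonalTuple n m,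
        (∏ i, ω (t i)) * (∑ i, if t i = r then (1 : ℝ) else 0)
          ≤ (η / 2 / M) * n * Z ω m n := fun r hr =>
    count_eq_small hω h0 hIII (mem_Icc.1 hr).1 (by positivity)
  choose! N hN using hall
  refine ⟨(Icc 1 M).sup N, fun n hn m hm => ?_⟩
  have hpt : ∀ x : ℕ, (if x = 0 then (0 : ℝ) else 1) ≤
      ∑ r ∈ Icc 1 M, (if x = r then (1 : ℝ) else 0) + x / M := by
    intro x
    rw [sum_ite_eq]
    split_ifs with h1 h2 h2
    · positivity
    · positivity
    · have : (0 : ℝ) ≤ x / M := by positivity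
      linarith
    · rw [mem_Icc] at h2
      have : (M : ℝ) ≤ x := by exact_mod_cast (by omega : M ≤ x)
      rw [zero_add, le_div_iff₀ hM0]
      linarith
  have hcount : ∀ t ∈ Finset.Nat.antidiagonalTuple n m,
      (∏ i, ω (t i)) * (∑ i, if t i = 0 then (0 : ℝ) else 1) ≤
      ∑ r ∈ Icc 1 M, (∏ i, ω (t i)) * (∑ i, if t i = r then (1 : ℝ) else 0) +
        (∏ i, ω (t i)) * (n / M) := by
    intro t ht
    rw [Finset.Nat.mem_antidiagonalTuple] at ht
    rw [← mul_sum, ← mul_add]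
    refine mul_le_mul_of_nonneg_left ?_ (prod_nonneg fun i _ => hω _)
    refine (sum_le_sum fun i _ => hpt (t i)).trans ?_
    rw [sum_add_distrib, sum_comm, ← sum_div]
    have : (∑ i, (t i : ℝ)) ≤ n := by
      rw [← Nat.cast_sum, ht]; exact_mod_cast hm
    gcongr
  refine (sum_le_sum hcount).trans ?_
  rw [sum_add_distrib, sum_comm, ← sum_mul]
  change _ + Z ω m n * (n / M) ≤ _
  have hZ := Z_nonneg hω m n
  have b1 : ∑ r ∈ Icc 1 M, ∑ t ∈ Finset.Nat.antidiagonalTuple n m,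
      (∏ i, ω (t i)) * (∑ i, if t i = r then (1 : ℝ) else 0) ≤ η / 2 * n * Z ω m n := by
    refine (sum_le_card_nsmul _ _ _ fun r hr => hN r hr n ((le_sup hr).trans hn) m).trans ?_
    rw [Nat.card_Icc, nsmul_eq_mul, Nat.add_sub_cancel]
    apply le_of_eq
    field_simp
  have b2 : Z ω m n * (n / M) ≤ η / 2 * n * Z ω m n := by
    have : (n : ℝ) / M ≤ η / 2 * n := by
      rw [div_eq_mul_one_div, mul_comm]
      gcongr
    rw [mul_comm]
    gcongr
  linarith

/-- Consequently a given box is empty with probability close to `1`: adding one box multiplies the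
partition function by almost exactly `ω 0`. -/
lemma Z_succ_le {ω : ℕ → ℝ} (hω : ∀ i, 0 ≤ ω i) (h0 : 0 < ω 0)
    (hIII : ∀ t : ℝ, 0 < t → ¬ Summable (fun i => ω i * t ^ i)) {η : ℝ} (hη : 0 < η) :
    ∃ N : ℕ, ∀ n, N ≤ n → ∀ m ≤ n + 1, (1 - η) * Z ω m (n + 1) ≤ ω 0 * Z ω m n := by
  obtain ⟨N, hN⟩ := count_ne_zero_small hω h0 hIII hη
  refine ⟨N, fun n hn m hm => ?_⟩
  have h1 := hN (n + 1) (by omega) m hm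
  rw [sum_sum_coord ω (fun x => if x = 0 then (0 : ℝ) else 1)] at h1
  have h2 : ∑ p ∈ antidiagonal m, (if p.1 = 0 then (0 : ℝ) else 1) * (ω p.1 * Z ω p.2 n) =
      Z ω m (n + 1) - ω 0 * Z ω m n := by
    rw [Z_succ, Finset.Nat.sum_antidiagonal_eq_sum_range_succ_mk,
      Finset.Nat.sum_antidiagonal_eq_sum_range_succ_mk, sum_range_succ', sum_range_succ']
    simp
  rw [h2] at h1
  push_cast at h1
  have hn : (0 : ℝ) < n + 1 := by positivity
  have h3 : (n + 1 : ℝ) * (Z ω m (n + 1) - ω 0 * Z ω m n) ≤ (n + 1) * (η * Z ω m (n + 1)) := by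
    linarith
  linarith [le_of_mul_le_mul_left h3 hn]

lemma Z_add_le {ω : ℕ → ℝ} (hω : ∀ i, 0 ≤ ω i) (h0 : 0 < ω 0) {η : ℝ} (hη : η ≤ 1) {N : ℕ}
    (hN : ∀ n, N ≤ n → ∀ m ≤ n + 1, (1 - η) * Z ω m (n + 1) ≤ ω 0 * Z ω m n)
    {n m : ℕ} (hn : N ≤ n) (hm : m ≤ n) :
    ∀ l, (1 - η) ^ l * Z ω m (n + l) ≤ ω 0 ^ l * Z ω m n
  | 0 => by simp
  | l + 1 => by
    have h1 := hN (n + l) (by omega) m (by omega)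
    have h2 := Z_add_le hω h0 hη hN hn hm l
    have : 0 ≤ (1 - η) ^ l := pow_nonneg (by linarith) _
    calc (1 - η) ^ (l + 1) * Z ω m (n + (l + 1))
        = (1 - η) ^ l * ((1 - η) * Z ω m (n + l + 1)) := by rw [pow_succ, mul_assoc]; rfl
      _ ≤ (1 - η) ^ l * (ω 0 * Z ω m (n + l)) := by gcongr
      _ = ω 0 * ((1 - η) ^ l * Z ω m (n + l)) := by ring
      _ ≤ ω 0 * (ω 0 ^ l * Z ω m n) := by gcongr
      _ = _ := by ring

/-! ### Separating the dominant forests -/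

/-- The forests consisting of one tree with `n - k + 1` vertices and `k - 1` single vertices have
total weight `k * ω 0 ^ (k - 1) * a (n - k + 1)`, and they are disjoint from the forests without
such a tree. -/
lemma small_add_le {ω : ℕ → ℝ} (hω : ∀ i, 0 ≤ ω i) {k n : ℕ} (hn : k < n) :
    (∑ t ∈ (Finset.Nat.antidiagonalTuple k n).filter
          (fun t => (∀ j, 0 < t j) ∧ (∀ j, t j ≤ n - k)), ∏ j, a ω (t j)) +
      k * (ω 0 ^ (k - 1) * a ω (n - k + 1)) ≤ F ω n k := by
  set A := (Finset.Nat.antidiagonalTuple k n).filter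
          (fun t => (∀ j, 0 < t j) ∧ (∀ j, t j ≤ n - k)) with hA
  set u : Fin k → (Fin k → ℕ) := fun i => Function.update (fun _ => 1) i (n - k + 1) with hu
  have hinj : Function.Injective u := by
    intro i j hij
    by_contra hne
    have := congrFun hij i
    simp only [hu, Function.update_self, Function.update_of_ne hne] at this
    omega
  have hsum : ∑ t ∈ univ.image u, ∏ j, a ω (t j) = k * (ω 0 ^ (k - 1) * a ω (n - k + 1)) := by
    rw [sum_image fun x _ y _ h => hinj h]
    have : ∀ i, ∏ j, a ω (u i j) = ω 0 ^ (k - 1) * a ω (n - k + 1) := by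
      intro i
      have ha1 : a ω 1 = ω 0 := by simp [a_eq_F, F]
      rw [← mul_prod_erase univ _ (mem_univ i),
        prod_congr rfl (g := fun _ => ω 0) (fun j hj => by
          simp only [hu, Function.update_of_ne (ne_of_mem_erase hj), ha1])]
      simp [hu, mul_comm]
    simp [this]
  have hdisj : Disjoint A (univ.image u) := by
    rw [disjoint_left]
    rintro t ht hB
    obtain ⟨i, -, rfl⟩ := mem_image.1 hB
    have := (mem_filter.1 ht).2.2 i
    simp [hu] at this
  rw [← hsum, ← sum_union hdisj, ← sum_prod_F]
  simp_rw [a_eq_F]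
  refine sum_le_sum_of_subset_of_nonneg (union_subset (filter_subset _ _) ?_)
    fun t _ _ => prod_nonneg fun j _ => F_nonneg hω _ _
  intro t ht
  obtain ⟨i, -, rfl⟩ := mem_image.1 ht
  rw [Finset.Nat.mem_antidiagonalTuple, hu, sum_update_of_mem (mem_univ i)]
  have : 0 < k := i.pos
  simp [card_sdiff]
  omega

/-- **Superexponentiality lemma for enriched trees of type III** (Lemma `le:supen`):
if `ω 0 > 0`, `ω k > 0` for some `k ≥ 2`, and the power series `∑ ω k t^k` diverges for
every `t > 0` (type III), then for every `k ≥ 2` the total weight of forests of `k` trees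
with `n` vertices, all of whose trees have at most `n - k` vertices, is `o(a (n - k + 1))`
as `n → ∞`. -/
theorem superexponentiality_type_III (ω : ℕ → ℝ) (hω : ∀ i, 0 ≤ ω i)
    (h0 : 0 < ω 0) (h2 : ∃ k, 2 ≤ k ∧ 0 < ω k)
    (hIII : ∀ t : ℝ, 0 < t → ¬ Summable (fun i => ω i * t ^ i)) :
    ∀ k, 2 ≤ k → ∀ ε : ℝ, 0 < ε → ∃ N : ℕ, ∀ n, N ≤ n →
      (∑ t ∈ (Finset.Nat.antidiagonalTuple k n).filter
          (fun t => (∀ j, 0 < t j) ∧ (∀ j, t j ≤ n - k)),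
        ∏ j, a ω (t j)) ≤ ε * a ω (n - k + 1) := by
  intro k hk ε hε
  -- choose `η` with `k * ω 0 ^ (k - 1) * ((1 - η) ^ (-(k - 1)) - 1) ≤ ε`
  obtain ⟨η, hη0, hη1, hη⟩ : ∃ η : ℝ, 0 < η ∧ η < 1 ∧
      k * ω 0 ^ (k - 1) ≤ (k * ω 0 ^ (k - 1) + ε) * (1 - η) ^ (k - 1) := by
    set C := k * ω 0 ^ (k - 1) with hC
    have hC0 : 0 ≤ C := by positivity
    have hlim : Filter.Tendsto (fun η : ℝ => (C + ε) * (1 - η) ^ (k - 1))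
        (nhdsWithin 0 (Set.Ioi 0)) (nhds ((C + ε) * (1 - 0) ^ (k - 1))) := by
      refine Filter.Tendsto.mono_left (Continuous.tendsto ?_ 0) nhdsWithin_le_nhds
      fun_prop
    have h1 := hlim.eventually_const_le (u := C) (by simp [hε])
    have h2 : ∀ᶠ η : ℝ in nhdsWithin 0 (Set.Ioi 0), η ∈ Set.Ioo (0 : ℝ) 1 :=
      Ioo_mem_nhdsGT one_pos
    obtain ⟨η, h3, h4⟩ := (h1.and h2).exists
    exact ⟨η, h4.1, h4.2, h3⟩
  obtain ⟨N, hN⟩ := Z_succ_le hω h0 hIII hη0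
  refine ⟨N + k + 1, fun n hn => ?_⟩
  have hA := small_add_le hω (show k < n by omega)
  refine le_of_add_le_add_right (hA.trans ?_)
  have hZ := Z_add_le hω h0 hη1.le hN (n := n - k + 1) (m := n - k) (by omega) (by omega) (k - 1)
  rw [show n - k + 1 + (k - 1) = n by omega] at hZ
  have hF := mul_F ω n k (by omega)
  have ha := mul_F ω (n - k + 1) 1 (by omega)
  rw [← a_eq_F, Nat.add_sub_cancel, Nat.cast_one, one_mul] at ha
  rw [← ha] at hZ
  have ha0 : 0 ≤ a ω (n - k + 1) := by rw [a_eq_F]; exact F_nonneg hω _ _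
  have hn0 : (0 : ℝ) < n := by exact_mod_cast (by omega : 0 < n)
  have hle : ((n - k + 1 : ℕ) : ℝ) ≤ n := by exact_mod_cast (by omega : n - k + 1 ≤ n)
  have hq : 0 < (1 - η) ^ (k - 1) := pow_pos (by linarith) _
  have hmain : (n * (1 - η) ^ (k - 1)) * F ω n k ≤
      (n * (1 - η) ^ (k - 1)) * ((k * ω 0 ^ (k - 1) + ε) * a ω (n - k + 1)) :=
    calc (n * (1 - η) ^ (k - 1)) * F ω n k
        = k * ((1 - η) ^ (k - 1) * Z ω (n - k) n) := by
          linear_combination (1 - η) ^ (k - 1) * hF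
      _ ≤ k * (ω 0 ^ (k - 1) * (((n - k + 1 : ℕ) : ℝ) * a ω (n - k + 1))) := by gcongr
      _ ≤ k * (ω 0 ^ (k - 1) * (n * a ω (n - k + 1))) := by gcongr
      _ = n * a ω (n - k + 1) * (k * ω 0 ^ (k - 1)) := by ring
      _ ≤ n * a ω (n - k + 1) * ((k * ω 0 ^ (k - 1) + ε) * (1 - η) ^ (k - 1)) := by gcongr
      _ = _ := by ring
  have := le_of_mul_le_mul_left hmain (mul_pos hn0 hq)
  linarith

end EnrichedTrees
end

section
/- Single component in superexponential Gibbs partitions (coefficient form of Corollary co:ne): Assume additionally f(1) > 0, a(1) > 0 and a(2) > 0. Then for every ε > 0 there is N such that for all n ≥ N: ∑_{ℓ≥2} f(ℓ)·c_ℓ(n) ≤ ε·a(n). (Hence the total weight of composite structures of size n with at least two components is negligible compared with f(1)·a(n), the weight of those with a single component, so the Gibbs partition consists of a single component with probability tending to 1.) -/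
/-!
Since `a 2` is positive, the lattice condition forces `d = 1`, so `a` is eventually positive.
Everything else rests on the giant-part condition at `k = 2`. Its sum contains
`a 2 * a (n - 2)`, whence `a n = o(a (n + 1))` (`ratio_small`), and it misses only the two pairs
with an entry `1`, whence `c a 2 n = O(a (n - 1))` (`c_two_le`).

To iterate the second bound uniformly in `ℓ`, replace `a` by a majorant `g`, positive on `n ≥ 1`
and equal to `a` far out, for which `∑_{i+j=m} a i * g j ≤ C * g (m - 1)` holds for *every* `m`
(`exists_conv_bound`). Induction on `ℓ` gives `c a (ℓ + 1) n ≤ C ^ ℓ * g (n - ℓ)` (`c_le`).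
As `f ℓ` grows at most exponentially, the weight of composites with at least two components is
`O(S n)` with `S n = ∑_{ℓ = 2}^n D ^ ℓ * g (n + 1 - ℓ)`. The recursion
`S (n + 1) = D * (S n + D * g n)` together with `g n = o(g (n + 1))` yields `S n = o(g n)`
(`recursion_small`).
-/

open Finset
open scoped Classical

namespace Gibbs

/-- `c a ℓ n`: sum of `a i₁ ⋯ a i_ℓ` over all `ℓ`-tuples of positive integers with
`i₁ + ⋯ + i_ℓ = n` (the total weight of `ℓ`-component composite structures of size `n`). -/
noncomputable def c (a : ℕ → ℝ) (ℓ n : ℕ) : ℝ :=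
  ∑ t ∈ (Finset.Nat.antidiagonalTuple ℓ n).filter (fun t => ∀ j, 0 < t j),
    ∏ j, a (t j)

/-- `cCap a ℓ n m`: as `c a ℓ n`, but restricted to tuples all of whose entries are `≤ m`. -/
noncomputable def cCap (a : ℕ → ℝ) (ℓ n m : ℕ) : ℝ :=
  ∑ t ∈ (Finset.Nat.antidiagonalTuple ℓ n).filter
      (fun t => (∀ j, 0 < t j) ∧ (∀ j, t j ≤ m)),
    ∏ j, a (t j)

/-- The giant-part condition at `k`. -/
def GiantPartAt (a : ℕ → ℝ) (k : ℕ) : Prop :=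
  ∀ ε : ℝ, 0 < ε → ∃ N : ℕ, ∀ n, N ≤ n → cCap a k n (n - k) ≤ ε * a (n - k + 1)

/-! ### Recursion for the weights `c a ℓ n` -/

lemma c_eq_sum {a : ℕ → ℝ} (ha0 : a 0 = 0) (l n : ℕ) :
    c a l n = ∑ t ∈ Finset.Nat.antidiagonalTuple l n, ∏ j, a (t j) := by
  unfold c
  rw [Finset.sum_filter_of_ne]
  intro t _ hne j
  by_contra h
  have h0 : t j = 0 := by omega
  exact hne (Finset.prod_eq_zero (Finset.mem_univ j) (by rw [h0, ha0]))

lemma c_nonneg {a : ℕ → ℝ} (ha : ∀ i, 0 ≤ a i) (l n : ℕ) : 0 ≤ c a l n :=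
  Finset.sum_nonneg fun _ _ => Finset.prod_nonneg fun _ _ => ha _

lemma c_one {a : ℕ → ℝ} (ha0 : a 0 = 0) (n : ℕ) : c a 1 n = a n := by
  rw [c_eq_sum ha0]; simp

/-- Splitting off the first component. -/
lemma c_succ {a : ℕ → ℝ} (ha0 : a 0 = 0) (l n : ℕ) :
    c a (l + 1) n = ∑ i ∈ Finset.range (n + 1), a i * c a l (n - i) := by
  simp only [c_eq_sum ha0, Finset.mul_sum]
  rw [Finset.sum_sigma']
  refine Finset.sum_bij' (fun t _ => ⟨t 0, Fin.tail t⟩)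
    (fun p _ => (Fin.cons p.1 p.2 : Fin (l + 1) → ℕ)) ?_ ?_ ?_ ?_ ?_
  · intro t ht
    rw [Finset.Nat.mem_antidiagonalTuple, Fin.sum_univ_succ] at ht
    simp only [Finset.mem_sigma, Finset.mem_range, Finset.Nat.mem_antidiagonalTuple, Fin.tail]
    omega
  · rintro ⟨i, t⟩ ht
    simp only [Finset.mem_sigma, Finset.mem_range, Finset.Nat.mem_antidiagonalTuple] at ht
    rw [Finset.Nat.mem_antidiagonalTuple, Fin.sum_univ_succ]
    simp only [Fin.cons_zero, Fin.cons_succ]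
    omega
  · intro t _
    simp
  · rintro ⟨i, t⟩ _
    simp
  · intro t _
    rw [Fin.prod_univ_succ]
    rfl

/-! ### Consequences of the giant-part condition at two components -/

lemma ratio_small {a : ℕ → ℝ} (ha : ∀ i, 0 ≤ a i) (ha2 : 0 < a 2) (hg : GiantPartAt a 2)
    (ε : ℝ) (hε : 0 < ε) : ∃ N : ℕ, ∀ n, N ≤ n → a n ≤ ε * a (n + 1) := by
  obtain ⟨N, hN⟩ := hg (ε * a 2) (by positivity)
  refine ⟨N + 2, fun n hn => ?_⟩
  have h := hN (n + 2) (by omega)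
  rw [Nat.add_sub_cancel] at h
  have h1 : a 2 * a n ≤ cCap a 2 (n + 2) n := by
    have hmem : (![2, n] : Fin 2 → ℕ) ∈ (Finset.Nat.antidiagonalTuple 2 (n + 2)).filter
        (fun t => (∀ j, 0 < t j) ∧ (∀ j, t j ≤ n)) := by
      simp only [Finset.mem_filter, Finset.Nat.mem_antidiagonalTuple, Fin.sum_univ_two,
        Fin.forall_fin_two, Matrix.cons_val_zero, Matrix.cons_val_one]
      omega
    have := Finset.single_le_sum (f := fun t : Fin 2 → ℕ => ∏ j, a (t j))
      (fun t _ => Finset.prod_nonneg fun j _ => ha (t j)) hmem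
    simpa [cCap, Fin.prod_univ_two] using this
  have h2 : a 2 * a n ≤ a 2 * (ε * a (n + 1)) := by linarith
  exact le_of_mul_le_mul_left h2 ha2

lemma c_two_le {a : ℕ → ℝ} (ha : ∀ i, 0 ≤ a i) (hg : GiantPartAt a 2) :
    ∃ N : ℕ, ∀ n, N ≤ n → c a 2 n ≤ (1 + 2 * a 1) * a (n - 1) := by
  obtain ⟨N, hN⟩ := hg 1 one_pos
  refine ⟨N + 2, fun n hn => ?_⟩
  have h := hN n (by omega)
  rw [show n - 2 + 1 = n - 1 by omega, one_mul] at h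
  have key : c a 2 n ≤ cCap a 2 n (n - 2) +
      ∑ t ∈ ({![1, n - 1], ![n - 1, 1]} : Finset (Fin 2 → ℕ)), ∏ j, a (t j) := by
    unfold c cCap
    rw [← Finset.sum_union_inter]
    refine le_trans (Finset.sum_le_sum_of_subset_of_nonneg ?_
      (fun t _ _ => Finset.prod_nonneg fun j _ => ha (t j)))
      (le_add_of_nonneg_right
        (Finset.sum_nonneg fun t _ => Finset.prod_nonneg fun j _ => ha (t j)))
    intro t ht
    simp only [Finset.mem_filter, Finset.Nat.mem_antidiagonalTuple, Fin.sum_univ_two,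
      Fin.forall_fin_two] at ht
    simp only [Finset.mem_union, Finset.mem_filter, Finset.Nat.mem_antidiagonalTuple,
      Fin.sum_univ_two, Fin.forall_fin_two, Finset.mem_insert, Finset.mem_singleton,
      funext_iff, Matrix.cons_val_zero, Matrix.cons_val_one]
    omega
  have hpair : ∑ t ∈ ({![1, n - 1], ![n - 1, 1]} : Finset (Fin 2 → ℕ)), ∏ j, a (t j)
      ≤ 2 * a 1 * a (n - 1) := by
    have hp : 0 ≤ a 1 * a (n - 1) := mul_nonneg (ha _) (ha _)
    by_cases he : (![1, n - 1] : Fin 2 → ℕ) = ![n - 1, 1]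
    · rw [he]
      simp [Fin.prod_univ_two]
      nlinarith
    · rw [Finset.sum_pair he]
      simp [Fin.prod_univ_two]
      nlinarith
  linarith

/-! ### A positive majorant with a global convolution bound -/

/-- `a` raised by `1` on `1 ≤ n < I`; positive on all `n ≥ 1` once `a` is positive on `n ≥ I`. -/
noncomputable def maj (a : ℕ → ℝ) (I n : ℕ) : ℝ :=
  a n + if 1 ≤ n ∧ n < I then 1 else 0

lemma maj_of_le (a : ℕ → ℝ) {I n : ℕ} (h : I ≤ n) : maj a I n = a n := by
  simp [maj, show ¬ n < I by omega]

lemma le_maj (a : ℕ → ℝ) (I n : ℕ) : a n ≤ maj a I n := by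
  unfold maj; split_ifs <;> simp

lemma maj_zero {a : ℕ → ℝ} (ha0 : a 0 = 0) (I : ℕ) : maj a I 0 = 0 := by
  simp [maj, ha0]

lemma maj_pos {a : ℕ → ℝ} (ha : ∀ i, 0 ≤ a i) {I : ℕ} (hI : ∀ i, I ≤ i → 0 < a i)
    {n : ℕ} (hn : 1 ≤ n) : 0 < maj a I n := by
  by_cases h : n < I
  · have := ha n
    simp only [maj, hn, h, and_self, if_true]
    linarith
  · rw [maj_of_le a (by omega)]
    exact hI n (by omega)

lemma conv_eventually {a : ℕ → ℝ} (ha : ∀ i, 0 ≤ a i) (ha0 : a 0 = 0) (ha2 : 0 < a 2)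
    (hg : GiantPartAt a 2) (I : ℕ) :
    ∃ N : ℕ, ∀ n, N ≤ n → ∑ i ∈ Finset.range (n + 1), a i * maj a I (n - i)
      ≤ (1 + 2 * a 1 + I) * maj a I (n - 1) := by
  obtain ⟨N₁, h₁⟩ := ratio_small ha ha2 hg 1 one_pos
  obtain ⟨N₂, h₂⟩ := c_two_le ha hg
  have hmono : ∀ m, N₁ ≤ m → ∀ k, a m ≤ a (m + k) := by
    intro m hm k
    induction k with
    | zero => simp
    | succ k ih => exact ih.trans (by simpa [add_assoc] using h₁ (m + k) (by omega))
  refine ⟨N₁ + N₂ + I + 1, fun n hn => ?_⟩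
  have e1 : ∑ i ∈ Finset.range (n + 1), a i * maj a I (n - i)
      = c a 2 n + ∑ j ∈ Finset.range (n + 1), if 1 ≤ j ∧ j < I then a (n - j) else 0 := by
    rw [c_succ ha0 1 n, ← Finset.sum_range_reflect
      (fun j => if 1 ≤ j ∧ j < I then a (n - j) else 0), ← Finset.sum_add_distrib]
    refine Finset.sum_congr rfl fun i hi => ?_
    rw [Finset.mem_range] at hi
    rw [c_one ha0, maj, mul_add, show n + 1 - 1 - i = n - i by omega,
      show n - (n - i) = i by omega, mul_ite, mul_one, mul_zero]
  have e2 : (∑ j ∈ Finset.range (n + 1), if 1 ≤ j ∧ j < I then a (n - j) else 0)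
      ≤ I * a (n - 1) := by
    rw [← Finset.sum_filter]
    calc _ ≤ ((Finset.range (n + 1)).filter (fun j => 1 ≤ j ∧ j < I)).card • a (n - 1) := by
          refine Finset.sum_le_card_nsmul _ _ _ fun j hj => ?_
          simp only [Finset.mem_filter, Finset.mem_range] at hj
          have := hmono (n - j) (by omega) (j - 1)
          rwa [show n - j + (j - 1) = n - 1 by omega] at this
      _ ≤ I * a (n - 1) := by
          rw [nsmul_eq_mul]
          refine mul_le_mul_of_nonneg_right ?_ (ha _)
          have : (Finset.range (n + 1)).filter (fun j => 1 ≤ j ∧ j < I) ⊆ Finset.range I := by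
            intro j hj
            simp only [Finset.mem_filter, Finset.mem_range] at hj ⊢
            omega
          exact_mod_cast (Finset.card_le_card this).trans (by simp)
  rw [e1, maj_of_le a (show I ≤ n - 1 by omega)]
  have := h₂ n (by omega)
  linarith

lemma exists_conv_bound {a : ℕ → ℝ} (ha : ∀ i, 0 ≤ a i) (ha0 : a 0 = 0) (ha2 : 0 < a 2)
    (hg : GiantPartAt a 2) {I : ℕ} (hI : ∀ i, I ≤ i → 0 < a i) :
    ∃ C : ℝ, 1 ≤ C ∧ ∀ m, ∑ i ∈ Finset.range (m + 1), a i * maj a I (m - i)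
      ≤ C * maj a I (m - 1) := by
  obtain ⟨N, hN⟩ := conv_eventually ha ha0 ha2 hg I
  set g := maj a I with hgdef
  have g0 : g 0 = 0 := maj_zero ha0 I
  have gnn : ∀ n, 0 ≤ g n := fun n => (ha n).trans (le_maj a I n)
  set v : ℕ → ℝ := fun m => ∑ i ∈ Finset.range (m + 1), a i * g (m - i) with hv
  have vnn : ∀ m, 0 ≤ v m := fun m =>
    Finset.sum_nonneg fun i _ => mul_nonneg (ha _) (gnn _)
  have qnn : ∀ m, 0 ≤ v m / g (m - 1) := fun m => div_nonneg (vnn m) (gnn _)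
  have Qnn : 0 ≤ ∑ m ∈ Finset.range N, v m / g (m - 1) := Finset.sum_nonneg fun m _ => qnn m
  have hC0 : (0 : ℝ) ≤ 2 * a 1 + I := by have := ha 1; positivity
  refine ⟨1 + 2 * a 1 + I + ∑ m ∈ Finset.range N, v m / g (m - 1), by linarith, fun m => ?_⟩
  change v m ≤ _
  rcases le_or_gt N m with h | h
  · have h1 : v m ≤ (1 + 2 * a 1 + I) * g (m - 1) := hN m h
    nlinarith [mul_nonneg Qnn (gnn (m - 1))]
  · rcases le_or_gt m 1 with hm | hm
    · have : v m = 0 := by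
        interval_cases m <;> simp [hv, Finset.sum_range_succ, ha0, g0]
      rw [this]
      exact mul_nonneg (by linarith) (gnn _)
    · have hp : 0 < g (m - 1) := maj_pos ha hI (by omega)
      have h1 : v m / g (m - 1) ≤ ∑ m ∈ Finset.range N, v m / g (m - 1) :=
        Finset.single_le_sum (f := fun m => v m / g (m - 1)) (fun m _ => qnn m)
          (Finset.mem_range.2 h)
      rw [← div_le_iff₀ hp]
      linarith

/-- Truncated subtraction is harmless: for `n ≤ ℓ` both sides vanish, since `g 0 = 0`. -/
lemma c_le {a g : ℕ → ℝ} (ha : ∀ i, 0 ≤ a i) (ha0 : a 0 = 0) (hag : ∀ n, a n ≤ g n)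
    (g0 : g 0 = 0) {C : ℝ} (hC : 1 ≤ C)
    (hconv : ∀ m, ∑ i ∈ Finset.range (m + 1), a i * g (m - i) ≤ C * g (m - 1)) (l : ℕ) :
    ∀ n, c a (l + 1) n ≤ C ^ l * g (n - l) := by
  induction l with
  | zero => intro n; simpa [c_one ha0] using hag n
  | succ l ih =>
    intro n
    rw [c_succ ha0]
    calc ∑ i ∈ Finset.range (n + 1), a i * c a (l + 1) (n - i)
        ≤ ∑ i ∈ Finset.range (n + 1), C ^ l * (a i * g (n - l - i)) := by
          refine Finset.sum_le_sum fun i _ => ?_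
          have := mul_le_mul_of_nonneg_left (ih (n - i)) (ha i)
          rw [show n - i - l = n - l - i by omega] at this
          linarith
      _ = C ^ l * ∑ i ∈ Finset.range (n - l + 1), a i * g (n - l - i) := by
          rw [← Finset.mul_sum]
          congr 1
          symm
          refine Finset.sum_subset (fun i hi => ?_) (fun i _ hi => ?_)
          · simp only [Finset.mem_range] at hi ⊢; omega
          · simp only [Finset.mem_range] at hi
            rw [show n - l - i = 0 by omega, g0, mul_zero]
      _ ≤ C ^ l * (C * g (n - l - 1)) :=
          mul_le_mul_of_nonneg_left (hconv _) (by positivity)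
      _ = C ^ (l + 1) * g (n - (l + 1)) := by
          rw [show n - l - 1 = n - (l + 1) by omega]; ring

/-! ### Summation over the number of components -/

/-- The ratio `x n = S n / g n` satisfies `x (n + 1) ≤ q n * (x n + D)` with `q n → 0`, so it is
first bounded and then tends to `0`. -/
lemma recursion_small {S g : ℕ → ℝ} {D : ℝ} (hD : 0 < D) (hg : ∀ n, 1 ≤ n → 0 < g n)
    (hsmall : ∀ ε : ℝ, 0 < ε → ∃ N : ℕ, ∀ n, N ≤ n → g n ≤ ε * g (n + 1))
    (hS : ∀ n, 1 ≤ n → S (n + 1) ≤ D * (S n + D * g n)) (ε : ℝ) (hε : 0 < ε) :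
    ∃ N : ℕ, ∀ n, N ≤ n → S n ≤ ε * g n := by
  obtain ⟨N₁, h₁⟩ := hsmall (1 / (2 * D)) (by positivity)
  set N₀ := N₁ + 1 with hN₀
  set K := max (S N₀ / g N₀) D with hK
  have hDK : D ≤ K := le_max_right _ _
  have hKpos : 0 < K := hD.trans_le hDK
  have hstep : ∀ n, 1 ≤ n → S n ≤ K * g n → S (n + 1) ≤ 2 * D * K * g n := by
    intro n hn h
    calc S (n + 1) ≤ D * (S n + D * g n) := hS n hn
      _ ≤ D * (K * g n + K * g n) := by have := hg n hn; gcongr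
      _ = 2 * D * K * g n := by ring
  have hbdd : ∀ n, N₀ ≤ n → S n ≤ K * g n := by
    intro n hn
    induction n, hn using Nat.le_induction with
    | base => exact (div_le_iff₀ (hg N₀ (by omega))).1 (le_max_left _ _)
    | succ n hn ih =>
      calc S (n + 1) ≤ 2 * D * K * g n := hstep n (by omega) ih
        _ ≤ 2 * D * K * (1 / (2 * D) * g (n + 1)) :=
            mul_le_mul_of_nonneg_left (h₁ n (by omega)) (by positivity)
        _ = K * g (n + 1) := by field_simp
  obtain ⟨N₂, h₂⟩ := hsmall (ε / (2 * D * K)) (by positivity)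
  refine ⟨N₀ + N₂ + 1, fun n hn => ?_⟩
  obtain ⟨m, rfl⟩ : ∃ m, n = m + 1 := ⟨n - 1, by omega⟩
  calc S (m + 1) ≤ 2 * D * K * g m := hstep m (by omega) (hbdd m (by omega))
    _ ≤ 2 * D * K * (ε / (2 * D * K) * g (m + 1)) :=
        mul_le_mul_of_nonneg_left (h₂ m (by omega)) (by positivity)
    _ = ε * g (m + 1) := by field_simp

lemma weighted_sum_succ (g : ℕ → ℝ) (D : ℝ) {n : ℕ} (hn : 1 ≤ n) :
    ∑ l ∈ Finset.Icc 2 (n + 1), D ^ l * g (n + 1 + 1 - l)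
      = D * (∑ l ∈ Finset.Icc 2 n, D ^ l * g (n + 1 - l) + D * g n) := by
  have h := Finset.sum_Ioc_add_eq_sum_Icc (f := fun l => D ^ l * g (n + 1 + 1 - l))
    (show 2 ≤ n + 1 by omega)
  rw [← h, mul_add, Finset.mul_sum]
  congr 1
  · rw [show Finset.Ioc 2 (n + 1) = (Finset.Icc 2 n).image (· + 1) by
      ext x
      simp only [Finset.mem_Ioc, Finset.mem_image, Finset.mem_Icc]
      constructor
      · intro hx; exact ⟨x - 1, by omega, by omega⟩
      · rintro ⟨y, hy, rfl⟩; omega]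
    rw [Finset.sum_image (fun x _ y _ hxy => Nat.add_right_cancel hxy)]
    refine Finset.sum_congr rfl fun l _ => ?_
    rw [show n + 1 + 1 - (l + 1) = n + 1 - l by omega, pow_succ]
    ring
  · rw [show n + 1 + 1 - 2 = n by omega]
    ring

/-- **Single component in superexponential Gibbs partitions** (coefficient form of
Corollary `co:ne`): if moreover `f 1 > 0`, `a 1 > 0` and `a 2 > 0`, then the total weight
of composite structures of size `n` with at least two components is `o(a n)`. -/
theorem gibbs_single_component
    (a : ℕ → ℝ) (ha : ∀ i, 0 ≤ a i) (ha0 : a 0 = 0)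
    (d : ℕ) (hd : 1 ≤ d)
    (hlattice : ∀ i, i % d ≠ 1 % d → a i = 0)
    (I : ℕ) (hI : ∀ i, I ≤ i → i % d = 1 % d → 0 < a i)
    (hrad0 : ∀ t : ℝ, 0 < t → ¬ Summable (fun i => a i * t ^ i))
    (hgiant : ∀ k, 2 ≤ k → GiantPartAt a k)
    (f : ℕ → ℝ) (hf : ∀ ℓ, 0 ≤ f ℓ)
    (hfrad : ∃ t : ℝ, 0 < t ∧ Summable (fun ℓ => f ℓ * t ^ ℓ))
    (hf1 : 0 < f 1) (ha1 : 0 < a 1) (ha2 : 0 < a 2) :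
    ∀ ε : ℝ, 0 < ε → ∃ N : ℕ, ∀ n, N ≤ n →
      (∑ ℓ ∈ Finset.Icc 2 n, f ℓ * c a ℓ n) ≤ ε * a n := by
  have hd1 : d = 1 := by
    by_contra hne
    refine ha2.ne' (hlattice 2 fun h => ?_)
    have : d ∣ 1 := by
      have h' : 1 ≡ 2 [MOD d] := h.symm
      exact (Nat.modEq_iff_dvd' (by norm_num)).1 h'
    exact hne (Nat.dvd_one.1 this)
  have hpos : ∀ i, I ≤ i → 0 < a i := fun i hi => hI i hi (by simp [hd1, Nat.mod_one])
  have hg2 := hgiant 2 le_rfl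
  obtain ⟨C, hC, hconv⟩ := exists_conv_bound ha ha0 ha2 hg2 hpos
  obtain ⟨t, ht, hsum⟩ := hfrad
  obtain ⟨M, hM, hfM⟩ : ∃ M : ℝ, 0 < M ∧ ∀ l, f l * t ^ l ≤ M := by
    have hnn : ∀ l, 0 ≤ f l * t ^ l := fun l => mul_nonneg (hf l) (by positivity)
    refine ⟨∑' l, f l * t ^ l + 1, by have h0 : 0 ≤ ∑' l, f l * t ^ l := tsum_nonneg hnn; linarith, fun l => ?_⟩
    have := hsum.le_tsum l fun j _ => hnn j
    linarith
  set g := maj a I with hgdef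
  have gnn : ∀ n, 0 ≤ g n := fun n => (ha n).trans (le_maj a I n)
  have hCpos : 0 < C := one_pos.trans_le hC
  set D := C / t with hDdef
  have hD : 0 < D := by positivity
  have hterm : ∀ n, ∀ l ∈ Finset.Icc 2 n, f l * c a l n ≤ M * (D ^ l * g (n + 1 - l)) := by
    intro n l hl
    rw [Finset.mem_Icc] at hl
    have h1 : c a l n ≤ C ^ l * g (n + 1 - l) := by
      have h := c_le ha ha0 (le_maj a I) (maj_zero ha0 I) hC hconv (l - 1) n
      rw [show l - 1 + 1 = l by omega, show n - (l - 1) = n + 1 - l by omega] at h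
      exact h.trans (mul_le_mul_of_nonneg_right
        (pow_le_pow_right₀ hC (by omega)) (gnn _))
    have h2 : f l ≤ M / t ^ l := by
      rw [le_div_iff₀ (by positivity)]
      exact hfM l
    calc f l * c a l n ≤ M / t ^ l * (C ^ l * g (n + 1 - l)) :=
          mul_le_mul h2 h1 (c_nonneg ha l n) (by positivity)
      _ = M * (D ^ l * g (n + 1 - l)) := by rw [hDdef, div_pow]; ring
  have hsmall : ∀ ε : ℝ, 0 < ε → ∃ N : ℕ, ∀ n, N ≤ n → g n ≤ ε * g (n + 1) := by
    intro ε hε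
    obtain ⟨N, hN⟩ := ratio_small ha ha2 hg2 ε hε
    refine ⟨N + I, fun n hn => ?_⟩
    rw [hgdef, maj_of_le a (by omega), maj_of_le a (by omega)]
    exact hN n (by omega)
  intro ε hε
  obtain ⟨N, hN⟩ := recursion_small
    (S := fun n => ∑ l ∈ Finset.Icc 2 n, D ^ l * g (n + 1 - l)) hD
    (fun n hn => maj_pos ha hpos hn) hsmall
    (fun n hn => (weighted_sum_succ g D hn).le) (ε / M) (by positivity)
  refine ⟨N + I, fun n hn => ?_⟩
  calc ∑ l ∈ Finset.Icc 2 n, f l * c a l n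
      ≤ M * ∑ l ∈ Finset.Icc 2 n, D ^ l * g (n + 1 - l) := by
        rw [Finset.mul_sum]
        exact Finset.sum_le_sum (hterm n)
    _ ≤ M * (ε / M * g n) := mul_le_mul_of_nonneg_left (hN n (by omega)) hM.le
    _ = ε * a n := by
        rw [hgdef, maj_of_le a (by omega)]
        field_simp

end Gibbs
end
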